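/- Let n ≥ 2, let k = (k₁, …, k_n) ∈ ℝⁿ be a unit vector, and let 0 ≤ t < 1. Set ζ = 1 − t²·(k₁² + ⋯ + k_{n−1}²) + 2it·(k₁k₂ + k₂k₃ + ⋯ + k_{n−1}k_n) ∈ ℂ. Then ζ ≠ 0 and |arg ζ| ≤ arctan(2t/(1 − t²)). -/

import Mathlib

theorem stmt_17 (n : ℕ) (hn : 2 ≤ n) (k : Fin n → ℝ)
    (hk : ∑ j, k j ^ 2 = 1) (t : ℝ) (ht0 : 0 ≤ t) (ht1 : t < 1) :
    let S1 : ℝ := ∑ j : Fin (n - 1), k (Fin.castLE (Nat.sub_le n 1) j) ^ 2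
    let S2 : ℝ := ∑ j : Fin (n - 1), k (Fin.castLE (Nat.sub_le n 1) j) *
        k ⟨(j : ℕ) + 1, by have := j.isLt; omega⟩
    let ζ : ℂ := 1 - (t : ℂ) ^ 2 * (S1 : ℂ) + 2 * Complex.I * (t : ℂ) * (S2 : ℂ)
    ζ ≠ 0 ∧ |Complex.arg ζ| ≤ Real.arctan (2 * t / (1 - t ^ 2)) := by
  intro S1 S2 ζ
  obtain ⟨m, rfl⟩ : ∃ m, n = m + 1 := ⟨n - 1, by omega⟩
  have e1 : S1 = ∑ j : Fin m, k j.castSucc ^ 2 := rfl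
  have e2 : S2 = ∑ j : Fin m, k j.castSucc * k j.succ := rfl
  have a1 := hk
  rw [Fin.sum_univ_castSucc] at a1
  have a2 := hk
  rw [Fin.sum_univ_succ] at a2
  have h1 : S1 ≤ 1 := by rw [e1]; nlinarith [sq_nonneg (k (Fin.last m))]
  have h2 : ∑ j : Fin m, k j.succ ^ 2 ≤ 1 := by nlinarith [sq_nonneg (k 0)]
  have p1 : 0 ≤ S1 + ∑ j : Fin m, k j.succ ^ 2 - 2 * S2 := by
    rw [e1, e2, Finset.mul_sum, ← Finset.sum_add_distrib, ← Finset.sum_sub_distrib]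
    exact Finset.sum_nonneg fun j _ => by nlinarith [sq_nonneg (k j.castSucc - k j.succ)]
  have p2 : 0 ≤ S1 + ∑ j : Fin m, k j.succ ^ 2 + 2 * S2 := by
    rw [e1, e2, Finset.mul_sum, ← Finset.sum_add_distrib, ← Finset.sum_add_distrib]
    exact Finset.sum_nonneg fun j _ => by nlinarith [sq_nonneg (k j.castSucc + k j.succ)]
  have b1 : S2 ≤ 1 := by linarith
  have b2 : -1 ≤ S2 := by linarith
  clear_value S1 S2
  have hre : ζ.re = 1 - t ^ 2 * S1 := by simp [ζ, ← Complex.ofReal_pow]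
  have him : ζ.im = 2 * t * S2 := by simp [ζ, ← Complex.ofReal_pow]
  have ht : 0 < 1 - t ^ 2 := by nlinarith
  have hle : 1 - t ^ 2 ≤ ζ.re := by rw [hre]; nlinarith [sq_nonneg t]
  have hpos : 0 < ζ.re := by linarith
  clear_value ζ
  have hne : ζ ≠ 0 := by rintro rfl; simp at hpos
  refine ⟨hne, ?_⟩
  have harg : Complex.arg ζ = Real.arctan (ζ.im / ζ.re) := by
    have h := abs_lt.1 (Complex.abs_arg_lt_pi_div_two_iff.2 (Or.inl hpos))
    rw [← Complex.tan_arg, Real.arctan_tan h.1 h.2]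
  have hq : |ζ.im / ζ.re| ≤ 2 * t / (1 - t ^ 2) := by
    rw [abs_div, abs_of_pos hpos]
    refine div_le_div₀ (by linarith) ?_ ht hle
    rw [him, abs_le]; constructor <;> nlinarith
  rw [abs_le] at hq
  rw [harg, abs_le, ← Real.arctan_neg]
  exact ⟨Real.arctan_strictMono.monotone hq.1, Real.arctan_strictMono.monotone hq.2⟩
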